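/- arXiv:2306.00206 — 2 statements merged into one kernel-verified Lean document; each statement's English description precedes it below -/
import Mathlib

section
/- Let X be a set, let h_1,…,h_M : X → ℝ^d be embedding functions, and let g_1,…,g_M : ℝ^d → ℝ^m be downstream heads, each Lipschitz with constant L ≥ 0 with respect to the Euclidean norms. Set f_i = g_i ∘ h_i. Suppose x*, x^r ∈ X satisfy ‖h_i(x^r) − h_i(x*)‖₂ ≤ ε for every i ∈ {1,…,M}, and let σ ≥ 0 satisfy σ² = (1/M²) ∑_{1≤i<j≤M} ‖f_i(x^r) − f_j(x^r)‖₂². Then the ensemble prediction variance at the test point satisfies (1/M²) ∑_{1≤i<j≤M} ‖f_i(x*) − f_j(x*)‖₂² ≤ (√2·L·ε + σ)². -/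
/-!
Replacing each of the outputs `y i` by an output `z i` at distance at most `r` changes every
pairwise distance by at most `2 * r`. Up to the factor `1 / M`, the square root of the ensemble
variance is the Euclidean norm of the vector of pairwise distances, so by Minkowski's inequality it
changes by at most the norm of a constant vector `2 * r` with `M * (M - 1) / 2 ≤ M ^ 2 / 2` entries,
divided by `M`; this is at most `√2 * r`. For outputs of Lipschitz heads, `r = L * ε`.
-/

open Finset
open scoped NNReal

theorem two_mul_card_filter_lt_le_sq (ι : Type*) [Fintype ι] [Preorder ι] [DecidableLT ι] :
    2 * #{p : ι × ι | p.1 < p.2} ≤ Fintype.card ι ^ 2 := by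
  have card_swap : #{p : ι × ι | p.2 < p.1} = #{p : ι × ι | p.1 < p.2} :=
    card_equiv (Equiv.prodComm ι ι) (by simp)
  calc 2 * #{p : ι × ι | p.1 < p.2}
      = #{p : ι × ι | p.1 < p.2} + #{p : ι × ι | p.2 < p.1} := by rw [card_swap, two_mul]
    _ ≤ #{p : ι × ι | p.1 < p.2} + #{p : ι × ι | ¬ p.1 < p.2} := by
        gcongr with p
        exact fun hgt => hgt.asymm
    _ = Fintype.card (ι × ι) := card_filter_add_card_filter_not _
    _ = Fintype.card ι ^ 2 := by rw [Fintype.card_prod, sq]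

theorem sqrt_sum_filter_lt_two_mul_sq_le {ι : Type*} [Fintype ι] [Preorder ι] [DecidableLT ι]
    {r : ℝ} (hr : 0 ≤ r) :
    √(∑ p : ι × ι with p.1 < p.2, (2 * r) ^ 2) ≤ √2 * r * Fintype.card ι := by
  have card_le : 2 * (#{p : ι × ι | p.1 < p.2} : ℝ) ≤ (Fintype.card ι : ℝ) ^ 2 := by
    exact_mod_cast two_mul_card_filter_lt_le_sq ι
  refine Real.sqrt_le_iff.2 ⟨by positivity, ?_⟩
  calc ∑ p : ι × ι with p.1 < p.2, (2 * r) ^ 2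
      = 2 * r ^ 2 * (2 * #{p : ι × ι | p.1 < p.2}) := by
        rw [sum_const, nsmul_eq_mul]
        ring
    _ ≤ 2 * r ^ 2 * (Fintype.card ι : ℝ) ^ 2 := by gcongr
    _ = (√2 * r * Fintype.card ι) ^ 2 := by
        rw [mul_pow, mul_pow, Real.sq_sqrt zero_le_two]

theorem sqrt_sum_add_sq_le {κ : Type*} (s : Finset κ) (a b : κ → ℝ) :
    √(∑ k ∈ s, (a k + b k) ^ 2) ≤ √(∑ k ∈ s, a k ^ 2) + √(∑ k ∈ s, b k ^ 2) := by
  simpa only [Real.sqrt_eq_rpow, Real.rpow_two, sq_abs] using Real.Lp_add_le s a b one_le_two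

theorem dist_le_two_mul_add_dist {Y : Type*} [PseudoMetricSpace Y] {x x' y y' : Y} {r : ℝ}
    (hx : dist x x' ≤ r) (hy : dist y y' ≤ r) : dist x y ≤ 2 * r + dist x' y' := by
  linarith [dist_triangle4_right x y x' y']

section EnsembleVariance

variable {ι Y : Type*} [Fintype ι] [LinearOrder ι] [PseudoMetricSpace Y]

/-- The ensemble prediction variance of the outputs `y i`, `i : ι`, of an ensemble: the sum of the
squared distances over unordered pairs of members, encoded as ordered pairs `i < j`, divided by the
square of the number of members. It is `0` for an empty ensemble. -/
noncomputable def ensembleVariance (y : ι → Y) : ℝ :=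
  (1 / (Fintype.card ι : ℝ) ^ 2) * ∑ p : ι × ι with p.1 < p.2, dist (y p.1) (y p.2) ^ 2

theorem ensembleVariance_eq_sum_norm_sub {F : Type*} [SeminormedAddCommGroup F] {M : ℕ}
    (y : Fin M → F) :
    ensembleVariance y =
      (1 / (M : ℝ) ^ 2) * ∑ i, ∑ j, if i < j then ‖y i - y j‖ ^ 2 else 0 := by
  simp only [ensembleVariance, sum_filter, Fintype.sum_prod_type, Fintype.card_fin, dist_eq_norm]

theorem sqrt_ensembleVariance (y : ι → Y) :
    √(ensembleVariance y) =
      √(∑ p : ι × ι with p.1 < p.2, dist (y p.1) (y p.2) ^ 2) / Fintype.card ι := by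
  rw [ensembleVariance, one_div_mul_eq_div, Real.sqrt_div' _ (sq_nonneg _),
    Real.sqrt_sq (Nat.cast_nonneg _)]

theorem sqrt_ensembleVariance_le_add [Nonempty ι] {y z : ι → Y} {r : ℝ}
    (hyz : ∀ i, dist (y i) (z i) ≤ r) :
    √(ensembleVariance y) ≤ √2 * r + √(ensembleVariance z) := by
  have hr : 0 ≤ r := dist_nonneg.trans (hyz (Classical.arbitrary ι))
  have card_pos : (0 : ℝ) < Fintype.card ι := by exact_mod_cast Fintype.card_pos
  rw [sqrt_ensembleVariance, sqrt_ensembleVariance, div_le_iff₀ card_pos, add_mul,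
    div_mul_cancel₀ _ card_pos.ne']
  calc √(∑ p : ι × ι with p.1 < p.2, dist (y p.1) (y p.2) ^ 2)
      ≤ √(∑ p : ι × ι with p.1 < p.2, (2 * r + dist (z p.1) (z p.2)) ^ 2) := by
        gcongr with p
        exact dist_le_two_mul_add_dist (hyz p.1) (hyz p.2)
    _ ≤ √(∑ p : ι × ι with p.1 < p.2, (2 * r) ^ 2) +
          √(∑ p : ι × ι with p.1 < p.2, dist (z p.1) (z p.2) ^ 2) := sqrt_sum_add_sq_le _ _ _
    _ ≤ √2 * r * Fintype.card ι +
          √(∑ p : ι × ι with p.1 < p.2, dist (z p.1) (z p.2) ^ 2) := by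
        gcongr
        exact sqrt_sum_filter_lt_two_mul_sq_le hr

theorem ensemble_variance_bound_general [Nonempty ι] {X E : Type*} [PseudoMetricSpace E]
    {h : ι → X → E} {g : ι → E → Y} {L : ℝ≥0} {ε σ : ℝ} (hσ : 0 ≤ σ)
    (hlip : ∀ i, LipschitzWith L (g i)) {xstar xr : X}
    (hnb : ∀ i, dist (h i xr) (h i xstar) ≤ ε)
    (hσ2 : σ ^ 2 = ensembleVariance fun i => g i (h i xr)) :
    (ensembleVariance fun i => g i (h i xstar)) ≤ (√2 * L * ε + σ) ^ 2 := by
  have output_dist_le (i : ι) : dist (g i (h i xstar)) (g i (h i xr)) ≤ L * ε :=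
    (hlip i).dist_le_mul_of_le (dist_comm (h i xr) (h i xstar) ▸ hnb i)
  have sqrt_le := sqrt_ensembleVariance_le_add output_dist_le
  rw [← hσ2, Real.sqrt_sq hσ, ← mul_assoc] at sqrt_le
  exact (Real.sqrt_le_iff.1 sqrt_le).2

end EnsembleVariance

/-- Ensemble prediction variance bound via a consistent reliable neighbor
(Theorem on neighborhood consistency). -/
theorem ensemble_variance_bound {X : Type*} (M d m : ℕ) (hM : 1 ≤ M)
    (h : Fin M → X → EuclideanSpace ℝ (Fin d))
    (g : Fin M → EuclideanSpace ℝ (Fin d) → EuclideanSpace ℝ (Fin m))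
    (L ε σ : ℝ) (hL : 0 ≤ L) (hσ : 0 ≤ σ)
    (hlip : ∀ i, ∀ u v : EuclideanSpace ℝ (Fin d), ‖g i u - g i v‖ ≤ L * ‖u - v‖)
    (xstar xr : X)
    (hnb : ∀ i, ‖h i xr - h i xstar‖ ≤ ε)
    (hσ2 : σ ^ 2 = (1 / (M : ℝ) ^ 2) *
      ∑ i : Fin M, ∑ j : Fin M,
        (if i < j then ‖g i (h i xr) - g j (h j xr)‖ ^ 2 else 0)) :
    (1 / (M : ℝ) ^ 2) *
      ∑ i : Fin M, ∑ j : Fin M,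
        (if i < j then ‖g i (h i xstar) - g j (h j xstar)‖ ^ 2 else 0)
      ≤ (Real.sqrt 2 * L * ε + σ) ^ 2 := by
  have : NeZero M := ⟨Nat.one_le_iff_ne_zero.1 hM⟩
  simp only [← dist_eq_norm] at hlip hnb
  exact (ensembleVariance_eq_sum_norm_sub _).symm.trans_le <|
    ensemble_variance_bound_general (L := ⟨L, hL⟩) hσ (fun i => .of_dist_le_mul (hlip i)) hnb
      (hσ2.trans (ensembleVariance_eq_sum_norm_sub _).symm)
end

section
/- Let X be a set, let h_1, h_2 : X → ℝ^d, and let g_1, g_2 : ℝ^d → ℝ^m each be Lipschitz with constant L ≥ 0; set f_1 = g_1 ∘ h_1 and f_2 = g_2 ∘ h_2. Suppose x*, x^a, x^b ∈ X satisfy ‖h_1(x^a) − h_1(x*)‖₂ ≤ ε and ‖h_2(x^b) − h_2(x*)‖₂ ≤ ε, and suppose ‖f_1(x*) − f_2(x*)‖₂ ≤ σ* and ‖f_1(x^b) − f_2(x^b)‖₂ ≤ σ_b. If in addition there exists L′ ≥ 0 such that ‖h_1(u) − h_1(v)‖₂ ≤ L′·‖f_1(u) − f_1(v)‖₂ for all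 u, v ∈ X (an inverse-Lipschitz/bi-Lipschitz condition on the predictor f_1 relative to the embedding h_1), then ‖h_1(x^b) − h_1(x*)‖₂ ≤ L′·(σ* + σ_b + 2Lε) + ε; that is, x^b is also a neighbor of x* in the representation space of h_1. -/
open scoped NNReal

theorem dist_le_dist_add_mul_dist_add_dist_of_lipschitzWith {E F : Type*}
    [PseudoMetricSpace E] [PseudoMetricSpace F] {K : ℝ≥0} {g : E → F} (hg : LipschitzWith K g)
    (p q : E) (y z : F) :
    dist y z ≤ dist y (g p) + K * dist p q + dist z (g q) :=
  calc
    dist y z ≤ dist y (g p) + dist (g p) (g q) + dist (g q) z := dist_triangle4 ..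
    _ ≤ dist y (g p) + K * dist p q + dist z (g q) := by
      rw [dist_comm (g q) z]
      gcongr
      exact hg.dist_le_mul p q

theorem neighbor_transfer_bound_general {X E₁ E₂ F : Type*}
    [PseudoMetricSpace E₁] [PseudoMetricSpace E₂] [PseudoMetricSpace F]
    {h₁ : X → E₁} {h₂ : X → E₂} {f₁ : X → F} {g₂ : E₂ → F} {L L' : ℝ≥0} {ε σ τ : ℝ} {x y : X}
    (hg₂ : LipschitzWith L g₂) (hinv : ∀ u v, dist (h₁ u) (h₁ v) ≤ L' * dist (f₁ u) (f₁ v))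
    (hxy : dist (h₂ y) (h₂ x) ≤ ε)
    (hx : dist (f₁ x) (g₂ (h₂ x)) ≤ σ) (hy : dist (f₁ y) (g₂ (h₂ y)) ≤ τ) :
    dist (h₁ y) (h₁ x) ≤ L' * (σ + τ + L * ε) := by
  have hf₁ : dist (f₁ y) (f₁ x) ≤ σ + τ + L * ε :=
    calc
      dist (f₁ y) (f₁ x)
          ≤ dist (f₁ y) (g₂ (h₂ y)) + L * dist (h₂ y) (h₂ x) + dist (f₁ x) (g₂ (h₂ x)) :=
        dist_le_dist_add_mul_dist_add_dist_of_lipschitzWith hg₂ ..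
      _ ≤ τ + L * ε + σ := by gcongr
      _ = σ + τ + L * ε := by ring
  exact (hinv y x).trans (by gcongr)

/-- Under the hypotheses of Statement 11, if additionally the predictor
f₁ = g₁ ∘ h₁ is inverse-Lipschitz relative to h₁ with constant L′, then x^b is also a
neighbor of x* in the representation space of h₁. -/
theorem neighbor_transfer_bound {X : Type*} (d m : ℕ)
    (h1 h2 : X → EuclideanSpace ℝ (Fin d))
    (g1 g2 : EuclideanSpace ℝ (Fin d) → EuclideanSpace ℝ (Fin m))
    (L ε σstar σb : ℝ) (hL : 0 ≤ L)
    (hg1 : ∀ u v : EuclideanSpace ℝ (Fin d), ‖g1 u - g1 v‖ ≤ L * ‖u - v‖)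
    (hg2 : ∀ u v : EuclideanSpace ℝ (Fin d), ‖g2 u - g2 v‖ ≤ L * ‖u - v‖)
    (xstar xa xb : X)
    (hna : ‖h1 xa - h1 xstar‖ ≤ ε)
    (hnb : ‖h2 xb - h2 xstar‖ ≤ ε)
    (hstar : ‖g1 (h1 xstar) - g2 (h2 xstar)‖ ≤ σstar)
    (hb : ‖g1 (h1 xb) - g2 (h2 xb)‖ ≤ σb)
    (L' : ℝ) (hL' : 0 ≤ L')
    (hinv : ∀ u v : X, ‖h1 u - h1 v‖ ≤ L' * ‖g1 (h1 u) - g1 (h1 v)‖) :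
    ‖h1 xb - h1 xstar‖ ≤ L' * (σstar + σb + 2 * L * ε) + ε := by
  lift L to ℝ≥0 using hL
  lift L' to ℝ≥0 using hL'
  have hε : 0 ≤ ε := (norm_nonneg _).trans hnb
  simp only [← dist_eq_norm] at hg2 hnb hstar hb hinv ⊢
  calc
    dist (h1 xb) (h1 xstar) ≤ L' * (σstar + σb + L * ε) :=
      neighbor_transfer_bound_general (.of_dist_le_mul hg2) hinv hnb hstar hb
    _ ≤ L' * (σstar + σb + 2 * L * ε) := by gcongr; linarith [L.coe_nonneg]
    _ ≤ L' * (σstar + σb + 2 * L * ε) + ε := le_add_of_nonneg_right hε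
end
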